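/- Let G be a cubical abelian group with connections. Then (G being Kan, so that its homotopy groups are defined) for every n ≥ 0 there is a natural isomorphism of groups π_n(G) ≅ H_n(N(G)), where N(G) is the normalized chain complex of G. -/

import Mathlib

universe u

section
variable (G : ℕ → Type u) [∀ n, AddCommGroup (G n)]
  (d : ∀ n : ℕ, ℕ → Bool → (G (n + 1) →+ G n))

/-- `N_n(G)`: the intersection of the kernels of the faces `∂_i^1`. -/
def NSubA : ∀ n, AddSubgroup (G n)
  | 0 => ⊤
  | (n + 1) => ⨅ i ∈ Finset.Icc 1 (n + 1), (d n i true).ker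

/-- The differential `Σ_{i=1}^{n+1} (-1)^{i+1} ∂_i^0 : G_{n+1} →+ G_n` of `N(G)`. -/
def deltaA (n : ℕ) : G (n + 1) →+ G n :=
  ∑ i ∈ Finset.Icc 1 (n + 1), ((-1 : ℤ) ^ (i + 1)) • d n i false

/-- The cycles `Z_n` of `N(G)`. -/
def ZSubA : ∀ n, AddSubgroup (G n)
  | 0 => ⊤
  | (n + 1) => NSubA G d (n + 1) ⊓ (deltaA G d n).ker

/-- The boundaries `B_n` of `N(G)`: the image of `N_{n+1}(G)` under the differential. -/
def BSubA (n : ℕ) : AddSubgroup (G n) :=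
  (NSubA G d (n + 1)).map (deltaA G d n)

/-- `\tilde G_n`: the `n`-cubes all of whose faces vanish. -/
def TildeA : ∀ n, AddSubgroup (G n)
  | 0 => ⊤
  | (n + 1) => ⨅ j ∈ Finset.Icc 1 (n + 1), ((d n j false).ker ⊓ (d n j true).ker)

/-- The homotopy relation on `\tilde G_n`. -/
def RelA (n : ℕ) (x y : G n) : Prop :=
  ∃ z : G (n + 1), d n 1 false z = x ∧ d n 1 true z = y ∧
    ∀ (j : ℕ) (ε : Bool), 2 ≤ j → j ≤ n + 1 → d n j ε z = 0

end

/-!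
Filter `N(G)` by the index `k` beyond which all faces `∂_i^0` vanish. If `∂_i^0 z = 0` for
`i > l + 1`, then `Γ_l ∂_{l+1}^0 z = (-1)^l (Γ_l ∂z - ∂ Γ_{l+1} z)`, so subtracting the correction
`Γ_l ∂_{l+1}^0 z`, which also kills the face `∂_{l+1}^0`, changes `z` by a boundary as soon as
`Γ_l ∂z` is one; this holds when `∂z` has no nonzero face. Iterating, every chain `z` whose boundary
lies in `\tilde G` is homologous to a chain whose only possibly nonzero face is `∂_1^0`. For cycles
this says that `\tilde G_n → H_n(N(G))` is onto; for chains bounded by `x - y` it turns a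
boundary into a homotopy `x ∼ y`.
-/

section

variable {G : ℕ → Type u} [∀ n, AddCommGroup (G n)]
  {d : ∀ n : ℕ, ℕ → Bool → (G (n + 1) →+ G n)}

/-- The relations between the faces of a cubical group. Here and in `IsFirstDegeneracy` and
`IsConnection` indices are shifted where needed to avoid truncated subtraction. -/
structure IsPrecubical (d : ∀ n : ℕ, ℕ → Bool → (G (n + 1) →+ G n)) : Prop where
  face_face {n i j : ℕ} (α ε : Bool) (hi : 1 ≤ i) (hij : i ≤ j) (hj : j ≤ n + 1)
    (x : G (n + 2)) : d n i α (d (n + 1) (j + 1) ε x) = d n j ε (d (n + 1) i α x)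

/-- The face relations of the degeneracies `s_1`, which provide the constant homotopies. -/
structure IsFirstDegeneracy (d : ∀ n : ℕ, ℕ → Bool → (G (n + 1) →+ G n))
    (σ : ∀ n : ℕ, G n →+ G (n + 1)) : Prop where
  face_one {n : ℕ} (α : Bool) (x : G n) : d n 1 α (σ n x) = x
  face_succ {n i : ℕ} (α : Bool) (hi : 1 ≤ i) (hi' : i ≤ n + 1) (x : G (n + 1)) :
    d (n + 1) (i + 1) α (σ (n + 1) x) = σ n (d n i α x)

/-- The face relations of connections. The relation `∂_i^1 Γ_j = s_j ∂_j^1` for `i = j, j + 1`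
is weakened to `∂_i^1 Γ_j x = 0` whenever `∂_j^1 x = 0`, so that degeneracies do not enter. -/
structure IsConnection (d : ∀ n : ℕ, ℕ → Bool → (G (n + 1) →+ G n))
    (Γ : ∀ n : ℕ, ℕ → (G (n + 1) →+ G (n + 2))) : Prop where
  face_of_le {n i j : ℕ} (α : Bool) (hi : 1 ≤ i) (hij : i ≤ j) (hj : j ≤ n + 1)
    (x : G (n + 2)) : d (n + 2) i α (Γ (n + 1) (j + 1) x) = Γ n j (d (n + 1) i α x)
  face_of_gt {n i j : ℕ} (α : Bool) (hj : 1 ≤ j) (hij : j < i) (hi : i ≤ n + 2)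
    (x : G (n + 2)) : d (n + 2) (i + 1) α (Γ (n + 1) j x) = Γ n j (d (n + 1) i α x)
  face_self_false {n j : ℕ} (hj : 1 ≤ j) (hj' : j ≤ n + 1) (x : G (n + 1)) :
    d (n + 1) j false (Γ n j x) = x
  face_succ_false {n j : ℕ} (hj : 1 ≤ j) (hj' : j ≤ n + 1) (x : G (n + 1)) :
    d (n + 1) (j + 1) false (Γ n j x) = x
  face_self_true {n j : ℕ} (hj : 1 ≤ j) (hj' : j ≤ n + 1) {x : G (n + 1)}
    (hx : d n j true x = 0) : d (n + 1) j true (Γ n j x) = 0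
  face_succ_true {n j : ℕ} (hj : 1 ≤ j) (hj' : j ≤ n + 1) {x : G (n + 1)}
    (hx : d n j true x = 0) : d (n + 1) (j + 1) true (Γ n j x) = 0

/-- The `k`-th step of the filtration used to normalize chains: the `(n + 1)`-cubes whose faces
`∂_i^0` with `i > k` vanish. -/
def faceFiltration (d : ∀ n : ℕ, ℕ → Bool → (G (n + 1) →+ G n)) (n k : ℕ) :
    AddSubgroup (G (n + 1)) :=
  ⨅ i ∈ Finset.Ioc k (n + 1), (d n i false).ker

theorem mem_NSubA_succ {n : ℕ} {x : G (n + 1)} :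
    x ∈ NSubA G d (n + 1) ↔ ∀ i, 1 ≤ i → i ≤ n + 1 → d n i true x = 0 := by
  simp [NSubA, AddSubgroup.mem_iInf]

theorem mem_TildeA_succ {n : ℕ} {x : G (n + 1)} :
    x ∈ TildeA G d (n + 1) ↔ ∀ i, 1 ≤ i → i ≤ n + 1 → ∀ ε, d n i ε x = 0 := by
  simp [TildeA, AddSubgroup.mem_iInf, AddSubgroup.mem_inf]

theorem mem_faceFiltration {n k : ℕ} {x : G (n + 1)} :
    x ∈ faceFiltration d n k ↔ ∀ i, k < i → i ≤ n + 1 → d n i false x = 0 := by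
  simp [faceFiltration, AddSubgroup.mem_iInf]

theorem faceFiltration_eq_top (n : ℕ) : faceFiltration d n (n + 1) = ⊤ := by
  simp [faceFiltration]

theorem mem_TildeA_succ_of_face_one {n : ℕ} {x : G (n + 1)} (hN : x ∈ NSubA G d (n + 1))
    (hF : x ∈ faceFiltration d n 1) (hx : d n 1 false x = 0) : x ∈ TildeA G d (n + 1) := by
  refine mem_TildeA_succ.2 fun i hi hi' ε => ?_
  cases ε with
  | true => exact mem_NSubA_succ.1 hN i hi hi'
  | false =>
    rcases hi.eq_or_lt with rfl | hi
    · exact hx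
    · exact mem_faceFiltration.1 hF i hi hi'

theorem deltaA_apply {n : ℕ} (x : G (n + 1)) :
    deltaA G d n x = ∑ i ∈ Finset.Icc 1 (n + 1), ((-1 : ℤ) ^ (i + 1)) • d n i false x := by
  simp [deltaA]

theorem deltaA_of_mem_faceFiltration {n k : ℕ} (hk : k ≤ n + 1) {x : G (n + 1)}
    (hx : x ∈ faceFiltration d n k) :
    deltaA G d n x = ∑ i ∈ Finset.Icc 1 k, ((-1 : ℤ) ^ (i + 1)) • d n i false x := by
  rw [deltaA_apply]
  refine (Finset.sum_subset (Finset.Icc_subset_Icc_right hk) fun i hi hi' => ?_).symm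
  rw [Finset.mem_Icc] at hi hi'
  rw [mem_faceFiltration.1 hx i (by omega) hi.2, smul_zero]

theorem deltaA_of_mem_faceFiltration_one {n : ℕ} {x : G (n + 1)}
    (hx : x ∈ faceFiltration d n 1) : deltaA G d n x = d n 1 false x := by
  simp [deltaA_of_mem_faceFiltration (by omega) hx]

theorem sum_Icc_sum_Icc_eq_zero {A : Type*} [AddCommGroup A] (a : ℕ → ℕ → A) (N : ℕ)
    (ha : ∀ i j, 1 ≤ i → i ≤ j → j ≤ N → a i (j + 1) = -a j i) :
    ∑ i ∈ Finset.Icc 1 N, ∑ j ∈ Finset.Icc 1 (N + 1), a i j = 0 := by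
  induction N with
  | zero => simp
  | succ N ih =>
    have cancel : ∑ i ∈ Finset.Icc 1 (N + 1), a i (N + 2) =
        -∑ i ∈ Finset.Icc 1 (N + 1), a (N + 1) i := by
      rw [← Finset.sum_neg_distrib]
      refine Finset.sum_congr rfl fun i hi => ?_
      rw [Finset.mem_Icc] at hi
      exact ha i (N + 1) hi.1 hi.2 le_rfl
    simp_rw [Finset.sum_Icc_succ_top (show 1 ≤ N + 1 + 1 by omega), Finset.sum_add_distrib]
    rw [cancel, Finset.sum_Icc_succ_top (show 1 ≤ N + 1 by omega),
      ih fun i j hi hij hj => ha i j hi hij (by omega), zero_add, add_neg_cancel]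

theorem IsPrecubical.deltaA_deltaA (hd : IsPrecubical d) {n : ℕ} (x : G (n + 2)) :
    deltaA G d n (deltaA G d (n + 1) x) = 0 := by
  have expand : deltaA G d n (deltaA G d (n + 1) x) =
      ∑ i ∈ Finset.Icc 1 (n + 1), ∑ j ∈ Finset.Icc 1 (n + 2),
        ((-1 : ℤ) ^ (i + j)) • d n i false (d (n + 1) j false x) := by
    rw [deltaA_apply]
    refine Finset.sum_congr rfl fun i _ => ?_
    rw [deltaA_apply, map_sum, Finset.smul_sum]
    refine Finset.sum_congr rfl fun j _ => ?_
    rw [map_zsmul, smul_smul]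
    congr 1
    ring
  rw [expand]
  refine sum_Icc_sum_Icc_eq_zero _ (n + 1) fun i j hi hij hj => ?_
  rw [hd.face_face false false hi hij hj, ← neg_smul]
  congr 1
  ring

theorem IsPrecubical.deltaA_eq_zero_of_mem_BSubA (hd : IsPrecubical d) {n : ℕ} {x : G (n + 1)}
    (hx : x ∈ BSubA G d (n + 1)) : deltaA G d n x = 0 := by
  obtain ⟨w, -, rfl⟩ := hx
  exact hd.deltaA_deltaA w

theorem IsPrecubical.face_mem_NSubA (hd : IsPrecubical d) {n k : ℕ} (hk : 1 ≤ k)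
    (hk' : k ≤ n + 2) {x : G (n + 2)} (hx : x ∈ NSubA G d (n + 2)) :
    d (n + 1) k false x ∈ NSubA G d (n + 1) := by
  rw [mem_NSubA_succ] at hx ⊢
  intro i hi hi'
  rcases lt_or_ge i k with h | h
  · obtain ⟨k, rfl⟩ : ∃ k', k = k' + 1 := ⟨k - 1, by omega⟩
    rw [hd.face_face true false hi (by omega) (by omega), hx i hi (by omega), map_zero]
  · rw [← hd.face_face false true hk h hi', hx (i + 1) (by omega) (by omega), map_zero]

theorem TildeA_le_ZSubA (n : ℕ) : TildeA G d n ≤ ZSubA G d n := by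
  cases n with
  | zero => exact le_rfl
  | succ n =>
    intro x hx
    rw [mem_TildeA_succ] at hx
    refine ⟨mem_NSubA_succ.2 fun i hi hi' => hx i hi hi' true, ?_⟩
    refine AddMonoidHom.mem_ker.2 ((deltaA_apply x).trans ?_)
    refine Finset.sum_eq_zero fun i hi => ?_
    rw [Finset.mem_Icc] at hi
    rw [hx i hi.1 hi.2, smul_zero]

namespace IsConnection

variable {Γ : ∀ n : ℕ, ℕ → (G (n + 1) →+ G (n + 2))}

theorem map_mem_NSubA (hΓ : IsConnection d Γ) {n j : ℕ} (hj : 1 ≤ j) (hj' : j ≤ n + 1)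
    {x : G (n + 1)} (hx : x ∈ NSubA G d (n + 1)) : Γ n j x ∈ NSubA G d (n + 2) := by
  rw [mem_NSubA_succ] at hx ⊢
  intro i hi hi'
  obtain h | rfl | rfl | h : i < j ∨ i = j ∨ i = j + 1 ∨ j + 1 < i := by omega
  · obtain ⟨n, rfl⟩ : ∃ n', n = n' + 1 := ⟨n - 1, by omega⟩
    obtain ⟨j, rfl⟩ : ∃ j', j = j' + 1 := ⟨j - 1, by omega⟩
    rw [hΓ.face_of_le true hi (by omega) (by omega), hx i hi (by omega), map_zero]
  · exact hΓ.face_self_true hj hj' (hx i hj hj')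
  · exact hΓ.face_succ_true hj hj' (hx j hj hj')
  · obtain ⟨n, rfl⟩ : ∃ n', n = n' + 1 := ⟨n - 1, by omega⟩
    obtain ⟨i, rfl⟩ : ∃ i', i = i' + 1 := ⟨i - 1, by omega⟩
    rw [hΓ.face_of_gt true hj (by omega) (by omega), hx i (by omega) (by omega), map_zero]

theorem map_mem_faceFiltration (hΓ : IsConnection d Γ) {n j k : ℕ} (hj : 1 ≤ j) (hjk : j ≤ k)
    {x : G (n + 1)} (hx : x ∈ faceFiltration d n k) :
    Γ n j x ∈ faceFiltration d (n + 1) (k + 1) := by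
  rw [mem_faceFiltration] at hx ⊢
  intro i hi hi'
  obtain ⟨n, rfl⟩ : ∃ n', n = n' + 1 := ⟨n - 1, by omega⟩
  obtain ⟨i, rfl⟩ : ∃ i', i = i' + 1 := ⟨i - 1, by omega⟩
  rw [hΓ.face_of_gt false hj (by omega) (by omega), hx i (by omega) (by omega), map_zero]

theorem sub_map_face_mem_faceFiltration (hd : IsPrecubical d) (hΓ : IsConnection d Γ) {n l : ℕ}
    (hl : 1 ≤ l) (hl' : l ≤ n + 1) {z : G (n + 2)} (hz : z ∈ faceFiltration d (n + 1) (l + 1)) :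
    z - Γ n l (d (n + 1) (l + 1) false z) ∈ faceFiltration d (n + 1) l := by
  rw [mem_faceFiltration] at hz ⊢
  intro i hi hi'
  rw [map_sub, sub_eq_zero]
  obtain rfl | h : i = l + 1 ∨ l + 1 < i := by omega
  · exact (hΓ.face_succ_false hl hl' _).symm
  · obtain ⟨n, rfl⟩ : ∃ n', n = n' + 1 := ⟨n - 1, by omega⟩
    obtain ⟨i, rfl⟩ : ∃ i', i = i' + 1 := ⟨i - 1, by omega⟩
    rw [hΓ.face_of_gt false hl (by omega) (by omega),
      ← hd.face_face false false (by omega) (by omega) (by omega), hz (i + 1) h hi', map_zero,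
      map_zero]

theorem deltaA_map_succ (hΓ : IsConnection d Γ) {n l : ℕ} (hl : l ≤ n + 1)
    {z : G (n + 2)} (hz : z ∈ faceFiltration d (n + 1) (l + 1)) :
    deltaA G d (n + 2) (Γ (n + 1) (l + 1) z) =
      ∑ i ∈ Finset.Icc 1 l, ((-1 : ℤ) ^ (i + 1)) • Γ n l (d (n + 1) i false z) := by
  have faces_cancel : ((-1 : ℤ) ^ (l + 1 + 1)) • z + ((-1 : ℤ) ^ (l + 1 + 1 + 1)) • z = 0 := by
    rw [pow_succ _ (l + 1 + 1), mul_neg_one, neg_smul, add_neg_cancel]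
  rw [deltaA_of_mem_faceFiltration (by omega)
      (hΓ.map_mem_faceFiltration (by omega) le_rfl hz),
    Finset.sum_Icc_succ_top (by omega), Finset.sum_Icc_succ_top (by omega),
    hΓ.face_self_false (by omega) (by omega), hΓ.face_succ_false (by omega) (by omega),
    add_assoc, faces_cancel, add_zero]
  refine Finset.sum_congr rfl fun i hi => ?_
  rw [Finset.mem_Icc] at hi
  rw [hΓ.face_of_le false hi.1 hi.2 hl]

theorem map_face_eq (hΓ : IsConnection d Γ) {n l : ℕ} (hl : l ≤ n + 1)
    {z : G (n + 2)} (hz : z ∈ faceFiltration d (n + 1) (l + 1)) :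
    Γ n l (d (n + 1) (l + 1) false z) = ((-1 : ℤ) ^ l) •
      (Γ n l (deltaA G d (n + 1) z) - deltaA G d (n + 2) (Γ (n + 1) (l + 1) z)) := by
  have sign : (-1 : ℤ) ^ l * (-1) ^ (l + 1 + 1) = 1 := by
    rw [← pow_add]
    exact Even.neg_one_pow ⟨l + 1, by ring⟩
  rw [hΓ.deltaA_map_succ hl hz, deltaA_of_mem_faceFiltration (by omega) hz,
    Finset.sum_Icc_succ_top (by omega), map_add, map_sum]
  simp only [map_zsmul]
  rw [add_sub_cancel_left, smul_smul, sign, one_smul]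

theorem map_mem_BSubA_of_mem_TildeA (hΓ : IsConnection d Γ) {n l : ℕ} (hl : 1 ≤ l)
    (hl' : l ≤ n + 1) {x : G (n + 1)} (hx : x ∈ TildeA G d (n + 1)) :
    Γ n l x ∈ BSubA G d (n + 2) := by
  have hxN : x ∈ NSubA G d (n + 1) := (TildeA_le_ZSubA (n + 1) hx).1
  rw [mem_TildeA_succ] at hx
  have hxF : x ∈ faceFiltration d n l :=
    mem_faceFiltration.2 fun i hi hi' => hx i (by omega) hi' false
  have boundary : deltaA G d (n + 2) (Γ (n + 1) (l + 1) (Γ n l x)) =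
      ((-1 : ℤ) ^ (l + 1)) • Γ n l x := by
    rw [hΓ.deltaA_map_succ hl' (hΓ.map_mem_faceFiltration hl le_rfl hxF),
      Finset.sum_eq_single_of_mem l (Finset.mem_Icc.2 ⟨hl, le_rfl⟩), hΓ.face_self_false hl hl']
    intro i hi hil
    rw [Finset.mem_Icc] at hi
    obtain ⟨n, rfl⟩ : ∃ n', n = n' + 1 := ⟨n - 1, by omega⟩
    obtain ⟨l, rfl⟩ : ∃ l', l = l' + 1 := ⟨l - 1, by omega⟩
    rw [hΓ.face_of_le false hi.1 (by omega) (by omega), hx i hi.1 (by omega), map_zero, map_zero,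
      smul_zero]
  refine ⟨((-1 : ℤ) ^ (l + 1)) • Γ (n + 1) (l + 1) (Γ n l x), AddSubgroup.zsmul_mem _
    (hΓ.map_mem_NSubA (by omega) (by omega) (hΓ.map_mem_NSubA hl hl' hxN)) _, ?_⟩
  rw [map_zsmul, boundary, smul_smul, ← mul_pow, neg_one_mul, neg_neg, one_pow, one_smul]

theorem map_face_mem_BSubA (hΓ : IsConnection d Γ) {n l : ℕ} (hl : 1 ≤ l) (hl' : l ≤ n + 1)
    {z : G (n + 2)} (hzN : z ∈ NSubA G d (n + 2)) (hzF : z ∈ faceFiltration d (n + 1) (l + 1))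
    (hz : deltaA G d (n + 1) z ∈ TildeA G d (n + 1)) :
    Γ n l (d (n + 1) (l + 1) false z) ∈ BSubA G d (n + 2) := by
  rw [hΓ.map_face_eq hl' hzF]
  exact AddSubgroup.zsmul_mem _ (AddSubgroup.sub_mem _ (hΓ.map_mem_BSubA_of_mem_TildeA hl hl' hz)
    (AddSubgroup.mem_map_of_mem _ (hΓ.map_mem_NSubA (by omega) (by omega) hzN))) _

theorem exists_sub_mem_BSubA_of_mem_faceFiltration (hd : IsPrecubical d) (hΓ : IsConnection d Γ)
    {n k : ℕ} (hk : k ≤ n) {z : G (n + 1)} (hzN : z ∈ NSubA G d (n + 1))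
    (hzF : z ∈ faceFiltration d n (k + 1)) (hz : deltaA G d n z ∈ TildeA G d n) :
    ∃ t ∈ NSubA G d (n + 1), t ∈ faceFiltration d n 1 ∧ z - t ∈ BSubA G d (n + 1) := by
  induction k generalizing z with
  | zero => exact ⟨z, hzN, hzF, by simp only [sub_self, zero_mem]⟩
  | succ k ih =>
    obtain ⟨n, rfl⟩ : ∃ n', n = n' + 1 := ⟨n - 1, by omega⟩
    set c := Γ n (k + 1) (d (n + 1) (k + 1 + 1) false z)
    have hcN : c ∈ NSubA G d (n + 2) :=
      hΓ.map_mem_NSubA (by omega) hk (hd.face_mem_NSubA (by omega) (by omega) hzN)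
    have hcB : c ∈ BSubA G d (n + 2) := hΓ.map_face_mem_BSubA (by omega) hk hzN hzF hz
    have hδ : deltaA G d (n + 1) (z - c) = deltaA G d (n + 1) z := by
      rw [map_sub, hd.deltaA_eq_zero_of_mem_BSubA hcB, sub_zero]
    obtain ⟨t, htN, htF, htB⟩ := ih (by omega) (AddSubgroup.sub_mem _ hzN hcN)
      (hΓ.sub_map_face_mem_faceFiltration hd (by omega) hk hzF) (hδ ▸ hz)
    refine ⟨t, htN, htF, ?_⟩
    rw [← sub_add_cancel z c, add_sub_right_comm]
    exact AddSubgroup.add_mem _ htB hcB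

theorem exists_sub_mem_BSubA (hd : IsPrecubical d) (hΓ : IsConnection d Γ) {n : ℕ}
    {z : G (n + 1)} (hzN : z ∈ NSubA G d (n + 1)) (hz : deltaA G d n z ∈ TildeA G d n) :
    ∃ t ∈ NSubA G d (n + 1), t ∈ faceFiltration d n 1 ∧ z - t ∈ BSubA G d (n + 1) :=
  hΓ.exists_sub_mem_BSubA_of_mem_faceFiltration hd le_rfl hzN
    (faceFiltration_eq_top (d := d) n ▸ AddSubgroup.mem_top z) hz

theorem exists_mem_TildeA_sub_mem_BSubA (hd : IsPrecubical d) (hΓ : IsConnection d Γ) {n : ℕ}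
    {z : G n} (hz : z ∈ ZSubA G d n) : ∃ t ∈ TildeA G d n, z - t ∈ BSubA G d n := by
  cases n with
  | zero => exact ⟨z, trivial, by simp only [sub_self, zero_mem]⟩
  | succ n =>
    obtain ⟨hzN, hzδ : deltaA G d n z = 0⟩ := hz
    obtain ⟨t, htN, htF, htB⟩ := hΓ.exists_sub_mem_BSubA hd hzN (hzδ ▸ zero_mem _)
    have hδ : deltaA G d n z - deltaA G d n t = 0 := by
      rw [← map_sub, hd.deltaA_eq_zero_of_mem_BSubA htB]
    refine ⟨t, mem_TildeA_succ_of_face_one htN htF ?_, htB⟩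
    rwa [hzδ, zero_sub, neg_eq_zero, deltaA_of_mem_faceFiltration_one htF] at hδ

theorem mem_BSubA_iff_of_mem_TildeA (hd : IsPrecubical d) (hΓ : IsConnection d Γ) {n : ℕ}
    {x : G n} (hx : x ∈ TildeA G d n) :
    x ∈ BSubA G d n ↔
      ∃ t ∈ NSubA G d (n + 1), t ∈ faceFiltration d n 1 ∧ d n 1 false t = x := by
  constructor
  · rintro ⟨w, hwN, rfl⟩
    obtain ⟨t, htN, htF, htB⟩ := hΓ.exists_sub_mem_BSubA hd hwN hx
    have hδ : deltaA G d n (w - t) = 0 := hd.deltaA_eq_zero_of_mem_BSubA htB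
    rw [map_sub, deltaA_of_mem_faceFiltration_one htF, sub_eq_zero] at hδ
    exact ⟨t, htN, htF, hδ.symm⟩
  · rintro ⟨t, htN, htF, rfl⟩
    exact ⟨t, htN, deltaA_of_mem_faceFiltration_one htF⟩

end IsConnection

namespace IsFirstDegeneracy

variable {σ : ∀ n : ℕ, G n →+ G (n + 1)}

theorem face_eq_zero_of_mem_TildeA (hσ : IsFirstDegeneracy d σ) {n : ℕ} {y : G n}
    (hy : y ∈ TildeA G d n) {j : ℕ} (ε : Bool) (hj : 2 ≤ j) (hj' : j ≤ n + 1) :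
    d n j ε (σ n y) = 0 := by
  obtain ⟨n, rfl⟩ : ∃ n', n = n' + 1 := ⟨n - 1, by omega⟩
  obtain ⟨j, rfl⟩ : ∃ j', j = j' + 1 := ⟨j - 1, by omega⟩
  rw [hσ.face_succ ε (by omega) (by omega), mem_TildeA_succ.1 hy j (by omega) (by omega), map_zero]

-- Translating a homotopy by the constant homotopy at `y` makes its end at `∂_1^1` zero.
theorem relA_iff (hσ : IsFirstDegeneracy d σ) {n : ℕ} {x y : G n} (hy : y ∈ TildeA G d n) :
    RelA G d n x y ↔
      ∃ t ∈ NSubA G d (n + 1), t ∈ faceFiltration d n 1 ∧ d n 1 false t = x - y := by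
  constructor
  · rintro ⟨z, hz_start, hz_end, hz⟩
    refine ⟨z - σ n y, mem_NSubA_succ.2 fun i hi hi' => ?_,
      mem_faceFiltration.2 fun i hi hi' => ?_, ?_⟩
    · rw [map_sub, sub_eq_zero]
      rcases hi.eq_or_lt with rfl | hi
      · rw [hz_end, hσ.face_one]
      · rw [hz i true hi hi', hσ.face_eq_zero_of_mem_TildeA hy true hi hi']
    · rw [map_sub, hz i false hi hi', hσ.face_eq_zero_of_mem_TildeA hy false hi hi', sub_zero]
    · rw [map_sub, hz_start, hσ.face_one]
  · rintro ⟨t, htN, htF, ht⟩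
    rw [mem_NSubA_succ] at htN
    refine ⟨t + σ n y, ?_, ?_, fun j ε hj hj' => ?_⟩
    · rw [map_add, ht, hσ.face_one, sub_add_cancel]
    · rw [map_add, htN 1 le_rfl (by omega), hσ.face_one, zero_add]
    · rw [map_add, hσ.face_eq_zero_of_mem_TildeA hy ε hj hj', add_zero]
      cases ε with
      | false => exact mem_faceFiltration.1 htF j hj hj'
      | true => exact htN j (by omega) hj'

theorem relA_iff_sub_mem_BSubA {Γ : ∀ n : ℕ, ℕ → (G (n + 1) →+ G (n + 2))}
    (hd : IsPrecubical d) (hσ : IsFirstDegeneracy d σ) (hΓ : IsConnection d Γ) {n : ℕ}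
    {x y : G n} (hx : x ∈ TildeA G d n) (hy : y ∈ TildeA G d n) :
    RelA G d n x y ↔ x - y ∈ BSubA G d n := by
  rw [hσ.relA_iff hy, hΓ.mem_BSubA_iff_of_mem_TildeA hd (AddSubgroup.sub_mem _ hx hy)]

end IsFirstDegeneracy

/-- The homomorphism `\tilde G_n → H_n(N(G))` sending a cube without nonzero faces, which is a
cycle, to its homology class. -/
def tildeToHomology (d : ∀ n : ℕ, ℕ → Bool → (G (n + 1) →+ G n)) (n : ℕ) :
    TildeA G d n →+ ZSubA G d n ⧸ (BSubA G d n).addSubgroupOf (ZSubA G d n) :=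
  (QuotientAddGroup.mk' _).comp (AddSubgroup.inclusion (TildeA_le_ZSubA n))

theorem tildeToHomology_eq_iff {n : ℕ} {a b : TildeA G d n} :
    tildeToHomology d n a = tildeToHomology d n b ↔ (a - b : G n) ∈ BSubA G d n := by
  rw [← sub_eq_zero, ← map_sub]
  exact (QuotientAddGroup.eq_zero_iff _).trans AddSubgroup.mem_addSubgroupOf

theorem IsConnection.tildeToHomology_surjective {Γ : ∀ n : ℕ, ℕ → (G (n + 1) →+ G (n + 2))}
    (hd : IsPrecubical d) (hΓ : IsConnection d Γ) (n : ℕ) :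
    Function.Surjective (tildeToHomology d n) := by
  intro q
  obtain ⟨z, rfl⟩ := QuotientAddGroup.mk_surjective q
  obtain ⟨t, ht, hzt⟩ := hΓ.exists_mem_TildeA_sub_mem_BSubA hd z.2
  refine ⟨⟨t, ht⟩, QuotientAddGroup.eq.2 (AddSubgroup.mem_addSubgroupOf.2 ?_)⟩
  rwa [sub_eq_neg_add] at hzt

theorem stmt7_general {σ : ∀ n : ℕ, G n →+ G (n + 1)}
    {Γ : ∀ n : ℕ, ℕ → (G (n + 1) →+ G (n + 2))}
    (hd : IsPrecubical d) (hσ : IsFirstDegeneracy d σ) (hΓ : IsConnection d Γ) (n : ℕ) :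
    ∃ e : Quot (fun a b : TildeA G d n => RelA G d n a b) ≃
        ZSubA G d n ⧸ (BSubA G d n).addSubgroupOf (ZSubA G d n),
      ∀ a, e (Quot.mk _ a) = tildeToHomology d n a := by
  have relA_iff (a b : TildeA G d n) :
      RelA G d n a b ↔ tildeToHomology d n a = tildeToHomology d n b := by
    rw [hσ.relA_iff_sub_mem_BSubA hd hΓ a.2 b.2, tildeToHomology_eq_iff]
  refine ⟨Equiv.ofBijective
    (Quot.lift (tildeToHomology d n) fun a b => (relA_iff a b).1) ⟨?_, ?_⟩, fun _ => rfl⟩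
  · rintro ⟨a⟩ ⟨b⟩ hab
    exact Quot.sound ((relA_iff a b).2 hab)
  · exact Quot.surjective_lift _ |>.2 (hΓ.tildeToHomology_surjective hd n)

end

theorem stmt7 (G : ℕ → Type u) [∀ n, AddCommGroup (G n)]
    (d : ∀ n : ℕ, ℕ → Bool → (G (n + 1) →+ G n))
    (s : ∀ n : ℕ, ℕ → (G n →+ G (n + 1)))
    (Γ : ∀ n : ℕ, ℕ → (G (n + 1) →+ G (n + 2)))
    (hdd : ∀ (n i j : ℕ) (α ε : Bool), 1 ≤ i → i < j → j ≤ n + 2 →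
      ∀ x, d n i α (d (n + 1) j ε x) = d n (j - 1) ε (d (n + 1) i α x))
    (hss : ∀ (n i j : ℕ), 1 ≤ i → i ≤ j → j ≤ n + 1 →
      ∀ x, s (n + 1) i (s n j x) = s (n + 1) (j + 1) (s n i x))
    (hds_lt : ∀ (n i j : ℕ) (α : Bool), 1 ≤ i → i < j → j ≤ n + 2 →
      ∀ x, d (n + 1) i α (s (n + 1) j x) = s n (j - 1) (d n i α x))
    (hds_eq : ∀ (n i : ℕ) (α : Bool), 1 ≤ i → i ≤ n + 1 → ∀ x, d n i α (s n i x) = x)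
    (hds_gt : ∀ (n i j : ℕ) (α : Bool), 1 ≤ j → j < i → i ≤ n + 2 →
      ∀ x, d (n + 1) i α (s (n + 1) j x) = s n j (d n (i - 1) α x))
    (hcc : ∀ (n i j : ℕ), 1 ≤ i → i ≤ j → j ≤ n + 1 →
      ∀ x, Γ (n + 1) i (Γ n j x) = Γ (n + 1) (j + 1) (Γ n i x))
    (hcs_lt : ∀ (n i j : ℕ), 1 ≤ i → i < j → j ≤ n + 2 →
      ∀ x, Γ (n + 1) i (s (n + 1) j x) = s (n + 2) (j + 1) (Γ n i x))
    (hcs_eq : ∀ (n i : ℕ), 1 ≤ i → i ≤ n + 2 →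
      ∀ x, Γ (n + 1) i (s (n + 1) i x) = s (n + 2) i (s (n + 1) i x))
    (hcs_gt : ∀ (n i j : ℕ), 1 ≤ j → j < i → i ≤ n + 2 →
      ∀ x, Γ (n + 1) i (s (n + 1) j x) = s (n + 2) j (Γ n (i - 1) x))
    (hdc_lt : ∀ (n i j : ℕ) (α : Bool), 1 ≤ i → i < j → j ≤ n + 2 →
      ∀ x, d (n + 2) i α (Γ (n + 1) j x) = Γ n (j - 1) (d (n + 1) i α x))
    (hdc_eq_zero : ∀ (n j : ℕ), 1 ≤ j → j ≤ n + 1 →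
      ∀ x, d (n + 1) j false (Γ n j x) = x ∧ d (n + 1) (j + 1) false (Γ n j x) = x)
    (hdc_eq_one : ∀ (n j : ℕ), 1 ≤ j → j ≤ n + 1 →
      ∀ x, d (n + 1) j true (Γ n j x) = s n j (d n j true x) ∧
        d (n + 1) (j + 1) true (Γ n j x) = s n j (d n j true x))
    (hdc_gt : ∀ (n i j : ℕ) (α : Bool), 1 ≤ j → j + 1 < i → i ≤ n + 3 →
      ∀ x, d (n + 2) i α (Γ (n + 1) j x) = Γ n j (d (n + 1) (i - 1) α x)) :
    ∀ n : ℕ, ∃ e : Quot (fun a b : ↥(TildeA G d n) => RelA G d n ↑a ↑b) ≃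
        (↥(ZSubA G d n) ⧸ (BSubA G d n).addSubgroupOf (ZSubA G d n)),
      ∀ a b : ↥(TildeA G d n),
        e (Quot.mk _ (a + b)) = e (Quot.mk _ a) + e (Quot.mk _ b) := by
  have hd : IsPrecubical d :=
    ⟨fun {n i j} α ε hi hij hj => hdd n i (j + 1) α ε hi (by omega) (by omega)⟩
  have hσ : IsFirstDegeneracy d fun n => s n 1 :=
    { face_one := fun {n} α => hds_eq n 1 α le_rfl (by omega)
      face_succ := fun {n i} α hi hi' =>
        hds_gt n (i + 1) 1 α le_rfl (by omega) (by omega) }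
  have hΓ : IsConnection d Γ :=
    { face_of_le := fun {n i j} α hi hij hj => hdc_lt n i (j + 1) α hi (by omega) (by omega)
      face_of_gt := fun {n i j} α hj hij hi => hdc_gt n (i + 1) j α hj (by omega) (by omega)
      face_self_false := fun {n j} hj hj' x => (hdc_eq_zero n j hj hj' x).1
      face_succ_false := fun {n j} hj hj' x => (hdc_eq_zero n j hj hj' x).2
      face_self_true := fun {n j} hj hj' {x} hx => by
        rw [(hdc_eq_one n j hj hj' x).1, hx, map_zero]
      face_succ_true := fun {n j} hj hj' {x} hx => by
        rw [(hdc_eq_one n j hj hj' x).2, hx, map_zero] }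
  intro n
  obtain ⟨e, he⟩ := stmt7_general hd hσ hΓ n
  exact ⟨e, fun a b => by simp only [he, map_add]⟩
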